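/- Suppose 0 ≤ ℓ(w, s i) ≤ B for all w ∈ 𝒲 and all i, and suppose P_{W,Z} ≪ P_W ⊗ P_Z. Then for every 0 < δ < 1, with probability at least 1 − δ under the joint law of (W,Z): |R_test(W,Z) − R_train(W,Z)| ≤ sqrt( (2·B²·C_{m,u}·(m+u)/(m·u)) · ( log(2/δ) + I(W;Z)/δ ) ). -/

import Mathlib

/-!
Let `P` be the joint law of `(W, Z)`, `Q` the product of its marginals, and `E` the event that the
gap `|R_test - R_train|` exceeds the asserted bound.

Under `Q` the event is rare. For a fixed parameter the gap is `(m+u)/(mu)` times a centred sum over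
the smaller of the two index blocks. By Maclaurin's inequality (`perm_prod_le`) the moment
generating function of a sum sampled without replacement is at most that of independent sampling,
so Hoeffding's lemma makes the sum sub-Gaussian with variance proxy `min(m,u) B² / 4`
(`subgaussian_perm`). Since `C_{m,u} ≥ 1`, this gives
`Q E ≤ 2 exp (-2 (log (2/δ) + I/δ))` (`gap_tail`).

Passing to `P` uses the variational bound
`P(E) log a + P(Eᶜ) log b ≤ D(P‖Q) - 1 + a Q(E) + b Q(Eᶜ)` (`kl_two_point`) with `a = δ / Q(E)` and
`b = 1 - δ`; together with the tail estimate it forces `P E ≤ δ` (`prob_le_of_kl`). The divergence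
is a genuine integral because `dP/dQ` is at most `(m+u)!` (`joint_le`, `integrable_llr_of_le`).
-/

open MeasureTheory ProbabilityTheory Real

noncomputable section

/-- The constant `C_{m,u} = 2(m+u)·max(m,u)/((m+u−1/2)·(2·max(m,u)−1))`. -/
def Cmu (m u : ℕ) : ℝ :=
  2 * ((m : ℝ) + u) * max (m : ℝ) u / ((((m : ℝ) + u) - 1/2) * (2 * max (m : ℝ) u - 1))

/-- Transductive training error: average loss over the first `m` indices of the
sampling sequence `z`. -/
def Rtrain {S W : Type*} (m u : ℕ) (s : Fin (m + u) → S) (ℓ : W → S → ℝ)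
    (w : W) (z : Fin (m + u) → Fin (m + u)) : ℝ :=
  (∑ i : Fin (m + u), if (i : ℕ) < m then ℓ w (s (z i)) else 0) / m

/-- Transductive test error: average loss over the last `u` indices of the
sampling sequence `z`. -/
def Rtest {S W : Type*} (m u : ℕ) (s : Fin (m + u) → S) (ℓ : W → S → ℝ)
    (w : W) (z : Fin (m + u) → Fin (m + u)) : ℝ :=
  (∑ i : Fin (m + u), if m ≤ (i : ℕ) then ℓ w (s (z i)) else 0) / u

instance (n : ℕ) : MeasurableSpace (Equiv.Perm (Fin n)) := ⊤

/-- The uniform distribution on the symmetric group of `Fin n` (sampling without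
replacement). -/
def uniformPerm (n : ℕ) : Measure (Equiv.Perm (Fin n)) :=
  letI : Nonempty (Equiv.Perm (Fin n)) := ⟨1⟩
  (PMF.uniformOfFintype (Equiv.Perm (Fin n))).toMeasure

/-- Kullback–Leibler divergence `D_KL(μ ‖ ν) = ∫ log(dμ/dν) dμ`. -/
def klDivR {α : Type*} [MeasurableSpace α] (μ ν : Measure α) : ℝ :=
  ∫ x, llr μ ν x ∂μ

/-- Mutual information `I(X;Y) = D_KL(P_{X,Y} ‖ P_X ⊗ P_Y)`. -/
def mutInfo {Ω α β : Type*} [MeasurableSpace Ω] [MeasurableSpace α] [MeasurableSpace β]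
    (μ : Measure Ω) (X : Ω → α) (Y : Ω → β) : ℝ :=
  klDivR (Measure.map (fun ω => (X ω, Y ω)) μ) ((Measure.map X μ).prod (Measure.map Y μ))


/-! ### Products along a uniform permutation -/

/-- One step of Maclaurin's inequality, in permutation form: adjoining a new index `k` to the
product costs at most the mean of `x`. Every coordinate `j` satisfies
`∑ z, x (z k) * ∏ i ∈ A, x (z i) ≤ ∑ z, x (z j) * ∏ i ∈ A, x (z i)`, by reindexing with the
transposition `(j k)` when `j ∉ A` and by AM-GM after the same reindexing when `j ∈ A`. -/
lemma perm_prod_step {n : ℕ} (x : Fin n → ℝ) (hx : ∀ i, 0 ≤ x i) (A : Finset (Fin n)) (k : Fin n)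
    (hk : k ∉ A) :
    n * ∑ z : Equiv.Perm (Fin n), x (z k) * ∏ i ∈ A, x (z i)
      ≤ (∑ j, x j) * ∑ z : Equiv.Perm (Fin n), ∏ i ∈ A, x (z i) := by
  have key : ∀ j, ∑ z : Equiv.Perm (Fin n), x (z k) * ∏ i ∈ A, x (z i)
      ≤ ∑ z : Equiv.Perm (Fin n), x (z j) * ∏ i ∈ A, x (z i) := by
    intro j
    have reindex : ∀ F : Equiv.Perm (Fin n) → ℝ, ∑ z, F (z * Equiv.swap j k) = ∑ z, F z :=
      fun F => Equiv.sum_comp (Equiv.mulRight (Equiv.swap j k)) F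
    by_cases hj : j ∈ A
    · obtain ⟨A', hA', rfl⟩ : ∃ A', j ∉ A' ∧ A = insert j A' :=
        ⟨A.erase j, Finset.notMem_erase j A, (Finset.insert_erase hj).symm⟩
      have hkA' : k ∉ A' := fun h => hk (Finset.mem_insert_of_mem h)
      have e1 : ∑ z : Equiv.Perm (Fin n), x (z k) ^ 2 * ∏ i ∈ A', x (z i)
          = ∑ z : Equiv.Perm (Fin n), x (z j) ^ 2 * ∏ i ∈ A', x (z i) := by
        rw [← reindex]
        refine Finset.sum_congr rfl fun z _ => ?_
        congr 1
        · simp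
        · refine Finset.prod_congr rfl fun i hi => ?_
          rw [Equiv.Perm.mul_apply, Equiv.swap_apply_of_ne_of_ne] <;> rintro rfl <;> contradiction
      have e2 : ∑ z : Equiv.Perm (Fin n), x (z j) * ∏ i ∈ insert j A', x (z i)
          = ∑ z : Equiv.Perm (Fin n),
            (x (z j) ^ 2 + x (z k) ^ 2) / 2 * ∏ i ∈ A', x (z i) := by
        have : ∀ z : Equiv.Perm (Fin n),
            (x (z j) ^ 2 + x (z k) ^ 2) / 2 * ∏ i ∈ A', x (z i)
            = (1 / 2) * (x (z j) ^ 2 * ∏ i ∈ A', x (z i))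
              + (1 / 2) * (x (z k) ^ 2 * ∏ i ∈ A', x (z i)) := fun z => by ring
        simp_rw [this, Finset.sum_add_distrib, ← Finset.mul_sum, e1, Finset.prod_insert hA',
          ← mul_assoc, ← sq]
        ring
      rw [e2]
      refine Finset.sum_le_sum fun z _ => ?_
      rw [Finset.prod_insert hA', ← mul_assoc]
      refine mul_le_mul_of_nonneg_right ?_ (Finset.prod_nonneg fun i _ => hx _)
      nlinarith [sq_nonneg (x (z j) - x (z k))]
    · refine le_of_eq ?_
      rw [← reindex]
      refine Finset.sum_congr rfl fun z _ => ?_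
      congr 1
      · simp
      · refine Finset.prod_congr rfl fun i hi => ?_
        rw [Equiv.Perm.mul_apply, Equiv.swap_apply_of_ne_of_ne] <;> rintro rfl <;> contradiction
  calc (n : ℝ) * ∑ z : Equiv.Perm (Fin n), x (z k) * ∏ i ∈ A, x (z i)
      = ∑ _j : Fin n, ∑ z : Equiv.Perm (Fin n), x (z k) * ∏ i ∈ A, x (z i) := by simp
    _ ≤ ∑ j : Fin n, ∑ z : Equiv.Perm (Fin n), x (z j) * ∏ i ∈ A, x (z i) :=
        Finset.sum_le_sum fun j _ => key j
    _ = (∑ j, x j) * ∑ z : Equiv.Perm (Fin n), ∏ i ∈ A, x (z i) := by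
        rw [Finset.sum_comm, Finset.mul_sum]
        refine Finset.sum_congr rfl fun z _ => ?_
        rw [← Finset.sum_mul, Equiv.sum_comp z x]

/-- Maclaurin's inequality: products sampled without replacement are dominated in mean by
products sampled with replacement. -/
lemma perm_prod_le {n : ℕ} (hn : 0 < n) (x : Fin n → ℝ) (hx : ∀ i, 0 ≤ x i)
    (A : Finset (Fin n)) :
    ∑ z : Equiv.Perm (Fin n), ∏ i ∈ A, x (z i)
      ≤ Fintype.card (Equiv.Perm (Fin n)) * ((∑ j, x j) / n) ^ A.card := by
  have hn' : (0 : ℝ) < n := by exact_mod_cast hn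
  induction A using Finset.induction_on with
  | empty => simp
  | insert k A hk ih =>
    have hS : 0 ≤ (∑ j, x j) / n := div_nonneg (Finset.sum_nonneg fun i _ => hx i) hn'.le
    have h := perm_prod_step x hx A k hk
    simp_rw [Finset.prod_insert hk, Finset.card_insert_of_notMem hk]
    calc ∑ z : Equiv.Perm (Fin n), x (z k) * ∏ i ∈ A, x (z i)
        ≤ (∑ j, x j) / n * ∑ z : Equiv.Perm (Fin n), ∏ i ∈ A, x (z i) := by
          rw [div_mul_eq_mul_div, le_div_iff₀ hn']; linarith
      _ ≤ (∑ j, x j) / n * (Fintype.card (Equiv.Perm (Fin n)) * ((∑ j, x j) / n) ^ A.card) :=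
          mul_le_mul_of_nonneg_left ih hS
      _ = _ := by ring

instance (n : ℕ) : IsProbabilityMeasure (uniformPerm n) := by
  unfold uniformPerm; infer_instance

lemma integral_uniformPerm (n : ℕ) (F : Equiv.Perm (Fin n) → ℝ) :
    ∫ z, F z ∂(uniformPerm n) = (∑ z, F z) / Fintype.card (Equiv.Perm (Fin n)) := by
  unfold uniformPerm
  rw [PMF.integral_eq_sum]
  simp [Finset.mul_sum, div_eq_inv_mul]

/-! ### Concentration for sampling without replacement -/

lemma mean_exp_le {n : ℕ} (hn : 0 < n) (a : Fin n → ℝ) (B : ℝ)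
    (ha : ∀ i, 0 ≤ a i ∧ a i ≤ B) (t : ℝ) :
    (∑ i, exp (t * (a i - (∑ j, a j) / n))) / n ≤ exp (B ^ 2 / 4 * t ^ 2 / 2) := by
  have : Nonempty (Fin n) := ⟨⟨0, hn⟩⟩
  have hmean : ∀ F : Fin n → ℝ,
      ∫ i, F i ∂(PMF.uniformOfFintype (Fin n)).toMeasure = (∑ i, F i) / n := by
    intro F
    rw [PMF.integral_eq_sum]
    simp [Finset.mul_sum, div_eq_inv_mul]
  have h := (hasSubgaussianMGF_of_mem_Icc (X := a) (a := 0) (b := B)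
    (μ := (PMF.uniformOfFintype (Fin n)).toMeasure) (by fun_prop)
    (Filter.Eventually.of_forall ha)).mgf_le t
  rw [mgf, hmean, hmean] at h
  refine h.trans_eq ?_
  congr 3
  simp [div_pow]
  norm_num

/-- Hoeffding's bound without replacement: the centred sum over any index set `A` is
sub-Gaussian with the variance proxy `|A| B² / 4` of independent sampling. -/
lemma subgaussian_perm {n : ℕ} (hn : 0 < n) (a : Fin n → ℝ) (B : ℝ)
    (ha : ∀ i, 0 ≤ a i ∧ a i ≤ B) (A : Finset (Fin n)) :
    HasSubgaussianMGF (fun z : Equiv.Perm (Fin n) => ∑ i ∈ A, (a (z i) - (∑ j, a j) / n))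
      ⟨A.card * (B ^ 2 / 4), by positivity⟩ (uniformPerm n) where
  integrable_exp_mul t := .of_finite
  mgf_le t := by
    have hc : (0 : ℝ) < Fintype.card (Equiv.Perm (Fin n)) := by exact_mod_cast Fintype.card_pos
    have h := perm_prod_le hn (fun i => exp (t * (a i - (∑ j, a j) / n)))
      (fun i => (exp_pos _).le) A
    rw [mgf, integral_uniformPerm, div_le_iff₀ hc]
    simp_rw [Finset.mul_sum, exp_sum]
    refine h.trans ?_
    rw [mul_comm]
    refine mul_le_mul_of_nonneg_right ?_ hc.le
    refine (pow_le_pow_left₀ (by positivity) (mean_exp_le hn a B ha t) _).trans_eq ?_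
    rw [← exp_nat_mul]
    congr 1
    change (A.card : ℝ) * (B ^ 2 / 4 * t ^ 2 / 2) = A.card * (B ^ 2 / 4) * t ^ 2 / 2
    ring

lemma tail_perm {n : ℕ} (hn : 0 < n) (a : Fin n → ℝ) (B : ℝ)
    (ha : ∀ i, 0 ≤ a i ∧ a i ≤ B) (A : Finset (Fin n)) (t : ℝ) (ht : 0 ≤ t) :
    (uniformPerm n).real {z | t ≤ |∑ i ∈ A, (a (z i) - (∑ j, a j) / n)|}
      ≤ 2 * exp (- t ^ 2 / (2 * (A.card * (B ^ 2 / 4)))) := by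
  have h := subgaussian_perm hn a B ha A
  have h1 := h.measure_ge_le ht
  have h2 := h.neg.measure_ge_le ht
  have hsub : {z : Equiv.Perm (Fin n) | t ≤ |∑ i ∈ A, (a (z i) - (∑ j, a j) / n)|}
      ⊆ {z | t ≤ ∑ i ∈ A, (a (z i) - (∑ j, a j) / n)}
        ∪ {z | t ≤ (-fun z : Equiv.Perm (Fin n) => ∑ i ∈ A, (a (z i) - (∑ j, a j) / n)) z} := by
    intro z hz
    rw [Set.mem_ofPred_eq, le_abs] at hz
    exact hz
  refine (measureReal_mono hsub).trans ((measureReal_union_le _ _).trans ?_)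
  rw [two_mul]
  exact add_le_add h1 h2

/-! ### A change-of-measure inequality -/

/-- Fenchel-Young for `r ↦ r log r - r`, whose conjugate is `exp`, written with `t = exp f`. -/
lemma mul_log_le_aux (r t : ℝ) (hr : 0 ≤ r) (ht : 0 < t) :
    r * log t ≤ r * log r - r + t := by
  rcases hr.eq_or_lt with rfl | hr
  · simpa using ht.le
  · have h := log_le_sub_one_of_pos (div_pos ht hr)
    rw [log_div ht.ne' hr.ne'] at h
    have h2 := mul_le_mul_of_nonneg_left h hr.le
    have h3 : r * (t / r - 1) = t - r := by field_simp
    linarith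

/-- Variational lower bound on the divergence, tested on a function taking two values. -/
lemma kl_two_point {α : Type*} [MeasurableSpace α] (P Q : Measure α) [IsProbabilityMeasure P]
    [IsProbabilityMeasure Q] (hac : P ≪ Q) (hint : Integrable (llr P Q) P) (E : Set α)
    (hE : MeasurableSet E) (a b : ℝ) (ha : 0 < a) (hb : 0 < b) :
    P.real E * log a + (1 - P.real E) * log b
      ≤ klDivR P Q - 1 + a * Q.real E + b * (1 - Q.real E) := by
  set r : α → ℝ := fun x => (P.rnDeriv Q x).toReal with hr
  set v : α → ℝ := E.indicator 1 with hv
  have hvP : Integrable v P := (integrable_const (1 : ℝ)).indicator hE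
  have hvQ : Integrable v Q := (integrable_const (1 : ℝ)).indicator hE
  have i1 : Integrable (fun x => r x * log (r x)) Q :=
    (integrable_rnDeriv_mul_log_iff hac).2 hint
  have i2 : Integrable r Q := Measure.integrable_toReal_rnDeriv
  have i3 : Integrable (fun x => b + (a - b) * v x) Q := (integrable_const b).add (hvQ.const_mul _)
  have i4 : Integrable (fun x => log b + (log a - log b) * v x) P :=
    (integrable_const _).add (hvP.const_mul _)
  have i5 : Integrable (fun x => r x * (log b + (log a - log b) * v x)) Q :=
    (integrable_toReal_rnDeriv_mul_iff hac).2 i4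
  have hpt : ∀ x, r x * (log b + (log a - log b) * v x)
      ≤ r x * log (r x) - r x + (b + (a - b) * v x) := by
    intro x
    by_cases hx : x ∈ E
    · have h := mul_log_le_aux (r x) a ENNReal.toReal_nonneg ha
      simp only [hv, Set.indicator_of_mem hx, Pi.one_apply]
      ring_nf at h ⊢; linarith
    · have h := mul_log_le_aux (r x) b ENNReal.toReal_nonneg hb
      simp only [hv, Set.indicator_of_notMem hx]
      ring_nf at h ⊢; linarith
  have hI := integral_mono i5 ((i1.sub i2).add i3) hpt
  have e0 : ∫ x, r x * (log b + (log a - log b) * v x) ∂Q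
      = log b + (log a - log b) * P.real E := by
    rw [integral_toReal_rnDeriv_mul hac (f := fun x => log b + (log a - log b) * v x),
      integral_add (integrable_const _) (hvP.const_mul _), integral_const_mul,
      integral_indicator_one hE]
    simp
  have e1 : ∫ x, (r x * log (r x) - r x + (b + (a - b) * v x)) ∂Q
      = klDivR P Q - 1 + (b + (a - b) * Q.real E) := by
    have e3 : ∫ x, r x * log (r x) ∂Q = klDivR P Q :=
      integral_toReal_rnDeriv_mul hac (f := llr P Q)
    have e4 : ∫ x, r x ∂Q = 1 := by
      rw [hr, Measure.integral_toReal_rnDeriv hac]; simp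
    rw [integral_add (f := fun x => r x * log (r x) - r x) (i1.sub i2) i3, integral_sub i1 i2, e3, e4,
      integral_add (integrable_const _) (hvQ.const_mul _), integral_const_mul,
      integral_indicator_one hE]
    simp
  have hI' : log b + (log a - log b) * P.real E
      ≤ klDivR P Q - 1 + (b + (a - b) * Q.real E) := by
    rw [← e0, ← e1]; exact hI
  linarith

/-- Bounded density forces an integrable log-likelihood ratio, since `r log r` is bounded on
bounded intervals of `[0, ∞)`. -/
lemma integrable_llr_of_le {α : Type*} [MeasurableSpace α] (P Q : Measure α)
    [IsProbabilityMeasure P] [IsProbabilityMeasure Q] (hac : P ≪ Q) (c : NNReal)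
    (h : ∀ A, MeasurableSet A → P A ≤ c * Q A) : Integrable (llr P Q) P := by
  rw [← integrable_rnDeriv_mul_log_iff hac]
  have hle : P.rnDeriv Q ≤ᵐ[Q] fun _ => (c : ENNReal) := by
    refine ae_le_of_forall_setLIntegral_le_of_sigmaFinite (Measure.measurable_rnDeriv P Q)
      fun A hA _ => ?_
    rw [setLIntegral_const]
    exact (Measure.setLIntegral_rnDeriv_le A).trans (h A hA)
  obtain ⟨C, hC⟩ := (isCompact_Icc (a := (0 : ℝ)) (b := c)).exists_bound_of_continuousOn
    (f := fun x => x * log x) continuous_mul_log.continuousOn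
  refine Integrable.of_bound (C := C) ?_ ?_
  · exact (continuous_mul_log.measurable.comp
      (Measure.measurable_rnDeriv P Q).ennreal_toReal).aestronglyMeasurable
  · filter_upwards [hle] with x hx
    exact hC _ ⟨ENNReal.toReal_nonneg, ENNReal.toReal_le_coe_of_le_coe hx⟩

/-- A law whose second marginal is uniform on permutations has density at most `n!` with respect
to the product of its marginals. -/
lemma joint_le {Ω 𝒲 : Type*} [MeasurableSpace Ω] [MeasurableSpace 𝒲] (n : ℕ)
    (μ : Measure Ω) (W : Ω → 𝒲) (Z : Ω → Equiv.Perm (Fin n)) [IsProbabilityMeasure μ]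
    (hW : Measurable W) (hZ : Measurable Z) (hZunif : Measure.map Z μ = uniformPerm n)
    (A : Set (𝒲 × Equiv.Perm (Fin n))) (hA : MeasurableSet A) :
    Measure.map (fun ω => (W ω, Z ω)) μ A
      ≤ (Fintype.card (Equiv.Perm (Fin n)) : NNReal)
        * ((Measure.map W μ).prod (Measure.map Z μ)) A := by
  have : IsProbabilityMeasure (Measure.map W μ) := Measure.isProbabilityMeasure_map hW.aemeasurable
  have hZs : ∀ z, uniformPerm n {z} = (Fintype.card (Equiv.Perm (Fin n)) : ENNReal)⁻¹ := by
    intro z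
    unfold uniformPerm
    rw [PMF.toMeasure_apply_singleton _ _ (MeasurableSet.singleton _),
      PMF.uniformOfFintype_apply]
  have hcard0 : (Fintype.card (Equiv.Perm (Fin n)) : ENNReal) ≠ 0 := by
    exact_mod_cast Fintype.card_ne_zero
  have hAz : ∀ z : Equiv.Perm (Fin n), MeasurableSet ((fun w => (w, z)) ⁻¹' A) :=
    fun z => measurable_prodMk_right hA
  rw [hZunif, Measure.prod_apply_symm hA, lintegral_fintype]
  simp_rw [hZs, ← Finset.sum_mul]
  rw [mul_comm (∑ z, _), ← mul_assoc]
  rw [ENNReal.coe_natCast, ENNReal.mul_inv_cancel hcard0 (ENNReal.natCast_ne_top _), one_mul,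
    Measure.map_apply (hW.prodMk hZ) hA]
  have hsub : (fun ω => (W ω, Z ω)) ⁻¹' A
      ⊆ ⋃ z ∈ (Finset.univ : Finset (Equiv.Perm (Fin n))), W ⁻¹' ((fun w => (w, z)) ⁻¹' A) := by
    intro ω hω
    simp only [Finset.mem_univ, Set.iUnion_true, Set.mem_iUnion]
    exact ⟨Z ω, hω⟩
  refine (measure_mono hsub).trans ((measure_biUnion_finset_le _ _).trans_eq ?_)
  refine Finset.sum_congr rfl fun z _ => ?_
  rw [Measure.map_apply hW (hAz z)]

/-! ### The tail of the transductive gap -/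

lemma one_le_Cmu (m u : ℕ) (hm : 1 ≤ m) : 1 ≤ Cmu m u := by
  have hm' : (1 : ℝ) ≤ m := by exact_mod_cast hm
  have hu' : (0 : ℝ) ≤ u := by positivity
  have hM : (m : ℝ) ≤ max (m : ℝ) u := le_max_left _ _
  unfold Cmu
  rw [le_div_iff₀ (mul_pos (by linarith) (by linarith))]
  nlinarith

/-- The gap between test and training error is, up to sign, `(m+u)/(mu)` times the centred sum
over either block of indices; the smaller block is the one used for concentration. -/
lemma gap_eq {S 𝒲 : Type*} (m u : ℕ) (hm : 1 ≤ m) (hu : 1 ≤ u) (s : Fin (m + u) → S)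
    (ℓ : 𝒲 → S → ℝ) (w : 𝒲) :
    ∃ A : Finset (Fin (m + u)), A.card = min m u ∧ ∀ z : Equiv.Perm (Fin (m + u)),
      |Rtest m u s ℓ w z - Rtrain m u s ℓ w z| = ((m : ℝ) + u) / (m * u) *
        |∑ i ∈ A, (ℓ w (s (z i)) - (∑ j, ℓ w (s j)) / ((m + u : ℕ) : ℝ))| := by
  have hm' : (m : ℝ) ≠ 0 := by positivity
  have hu' : (u : ℝ) ≠ 0 := by positivity
  have hmu' : (m : ℝ) + u ≠ 0 := by positivity
  have hpos : (0 : ℝ) ≤ ((m : ℝ) + u) / (m * u) := by positivity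
  have hc1 : (Finset.univ.filter fun i : Fin (m + u) => (i : ℕ) < m).card = m := by
    rw [Fin.card_filter_val_lt]; omega
  have hc2 : (Finset.univ.filter fun i : Fin (m + u) => m ≤ (i : ℕ)).card = u := by
    have h := Finset.card_filter_add_card_filter_not (s := (Finset.univ : Finset (Fin (m + u))))
      (fun i : Fin (m + u) => (i : ℕ) < m)
    simp only [not_lt, Finset.card_univ, Fintype.card_fin] at h
    omega
  have hsplit : ∀ z : Equiv.Perm (Fin (m + u)),
      (∑ i ∈ Finset.univ.filter fun i : Fin (m + u) => (i : ℕ) < m, ℓ w (s (z i)))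
        + ∑ i ∈ Finset.univ.filter fun i : Fin (m + u) => m ≤ (i : ℕ), ℓ w (s (z i))
        = ∑ j, ℓ w (s j) := by
    intro z
    have h := Finset.sum_filter_add_sum_filter_not (Finset.univ : Finset (Fin (m + u)))
      (fun i : Fin (m + u) => (i : ℕ) < m) (fun i => ℓ w (s (z i)))
    simp only [not_lt] at h
    rw [h, Equiv.sum_comp z fun i => ℓ w (s i)]
  rcases le_total m u with h | h
  · refine ⟨_, hc1.trans (min_eq_left h).symm, fun z => ?_⟩
    rw [← abs_of_nonneg hpos, ← abs_mul, ← abs_neg (Rtest m u s ℓ w z - _)]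
    congr 1
    rw [Finset.sum_sub_distrib, Finset.sum_const, hc1, Rtest, Rtrain, ← Finset.sum_filter,
      ← Finset.sum_filter, ← hsplit z]
    push_cast
    rw [nsmul_eq_mul]
    field_simp
    ring
  · refine ⟨_, hc2.trans (min_eq_right h).symm, fun z => ?_⟩
    rw [← abs_of_nonneg hpos, ← abs_mul]
    congr 1
    rw [Finset.sum_sub_distrib, Finset.sum_const, hc2, Rtest, Rtrain, ← Finset.sum_filter,
      ← Finset.sum_filter, ← hsplit z]
    push_cast
    rw [nsmul_eq_mul]
    field_simp
    ring

/-- For a fixed parameter the gap has Gaussian tails. The exponent `2 L` uses `1 ≤ Cmu m u` and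
`max m u ≥ (m+u)/2`. -/
lemma gap_tail {S 𝒲 : Type*} (m u : ℕ) (hm : 1 ≤ m) (hu : 1 ≤ u) (s : Fin (m + u) → S)
    (B : ℝ) (hB : 0 < B) (ℓ : 𝒲 → S → ℝ) (w : 𝒲)
    (hℓ : ∀ i : Fin (m + u), 0 ≤ ℓ w (s i) ∧ ℓ w (s i) ≤ B) (L : ℝ) (hL : 0 ≤ L) :
    (uniformPerm (m + u)).real {z | √(2 * B ^ 2 * Cmu m u * ((m : ℝ) + u) / (m * u) * L)
        < |Rtest m u s ℓ w z - Rtrain m u s ℓ w z|} ≤ 2 * exp (-(2 * L)) := by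
  obtain ⟨A, hA, hgap⟩ := gap_eq m u hm hu s ℓ w
  have hm' : (0 : ℝ) < m := by exact_mod_cast hm
  have hu' : (0 : ℝ) < u := by exact_mod_cast hu
  have hC := one_le_Cmu m u hm
  set V := 2 * B ^ 2 * Cmu m u * ((m : ℝ) + u) / (m * u) * L with hV
  have hV0 : 0 ≤ V := by positivity
  have hκ : 0 < ((m : ℝ) + u) / (m * u) := by positivity
  set t := √V / (((m : ℝ) + u) / (m * u)) with ht
  have ht0 : 0 ≤ t := by positivity
  have hsub : {z : Equiv.Perm (Fin (m + u)) | √V < |Rtest m u s ℓ w z - Rtrain m u s ℓ w z|}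
      ⊆ {z | t ≤ |∑ i ∈ A, (ℓ w (s (z i)) - (∑ j, ℓ w (s j)) / ((m + u : ℕ) : ℝ))|} := by
    intro z hz
    rw [Set.mem_ofPred_eq, hgap] at hz
    rw [Set.mem_ofPred_eq, ht, div_le_iff₀' hκ]
    exact hz.le
  refine (measureReal_mono hsub).trans
    ((tail_perm (by omega) (fun i => ℓ w (s i)) B hℓ A t ht0).trans ?_)
  refine mul_le_mul_of_nonneg_left (exp_le_exp.2 ?_) zero_le_two
  rw [neg_div, neg_le_neg_iff, hA, Nat.cast_min]
  have hmin : (0 : ℝ) < min (m : ℝ) u := lt_min hm' hu'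
  rw [le_div_iff₀ (by positivity), ht, div_pow, sq_sqrt hV0, hV]
  have e : 2 * B ^ 2 * Cmu m u * ((m : ℝ) + u) / (m * u) * L / (((m : ℝ) + u) / (m * u)) ^ 2
      = (B ^ 2 * L) * (Cmu m u * (2 * (m * u) / (m + u))) := by
    field_simp
  have e' : 2 * L * (2 * (min (m : ℝ) u * (B ^ 2 / 4))) = (B ^ 2 * L) * min (m : ℝ) u := by ring
  rw [e, e']
  refine mul_le_mul_of_nonneg_left ?_ (by positivity)
  -- the smaller number is at most the harmonic mean
  have hh : min (m : ℝ) u ≤ 2 * (m * u) / (m + u) := by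
    rw [le_div_iff₀ (by positivity)]
    rcases le_total (m : ℝ) u with h | h
    · rw [min_eq_left h]; nlinarith
    · rw [min_eq_right h]; nlinarith
  exact hh.trans (le_mul_of_one_le_left (by positivity) hC)

/-! ### From the product law to the joint law -/

lemma entropy_aux (δ : ℝ) (hδ0 : 0 < δ) (hδ1 : δ < 1) :
    0 ≤ δ * (log 2 - log δ) + (1 - δ) * log (1 - δ) := by
  have h2 := log_two_gt_d9
  have h2' := log_two_lt_d9
  have hlog : log δ ≤ δ - 1 := log_le_sub_one_of_pos hδ0
  have hmul : δ * (log 2 + 1 - δ) ≤ δ * (log 2 - log δ) :=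
    mul_le_mul_of_nonneg_left (by linarith) hδ0.le
  rcases le_total δ (1 / 2) with h | h
  · have hy := mul_log_le_aux (1 - δ) 1 (by linarith) one_pos
    rw [log_one] at hy
    nlinarith
  · have hy := mul_log_le_aux (1 - δ) (1 / 2) (by linarith) (by norm_num)
    rw [one_div, log_inv] at hy
    nlinarith

/-- If an event of `Q`-mass at most `2 exp (-2 (log (2/δ) + I/δ))` has `P`-mass `p`, then the
two-point variational bound at the values `δ / q` and `1 - δ` forces `p ≤ δ`. -/
lemma prob_le_of_kl (δ I p q : ℝ) (hδ0 : 0 < δ) (hδ1 : δ < 1) (hI : 0 ≤ I) (hq0 : 0 < q)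
    (hq : q ≤ 2 * exp (-(2 * (log (2 / δ) + I / δ))))
    (h : p * log (δ / q) + (1 - p) * log (1 - δ) ≤ I - 1 + δ / q * q + (1 - δ) * (1 - q)) :
    p ≤ δ := by
  by_contra! hp
  have hent := entropy_aux δ hδ0 hδ1
  have hM : log (1 - δ) ≤ 0 := log_nonpos (by linarith) (by linarith)
  have hlδ : log δ < 0 := log_neg hδ0 hδ1
  have hl2 : 0 < log 2 := log_pos one_lt_two
  have hlq : log q ≤ log 2 - 2 * (log 2 - log δ + I / δ) := by
    have := log_le_log hq0 hq
    rw [log_mul two_ne_zero (exp_ne_zero _), log_exp, log_div two_ne_zero hδ0.ne'] at this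
    linarith
  have hId : 0 ≤ I / δ := by positivity
  have hδI : δ * (I / δ) = I := by field_simp
  rw [log_div hδ0.ne' hq0.ne', div_mul_cancel₀ _ hq0.ne'] at h
  have hG : log 2 - log δ + 2 * (I / δ) ≤ log δ - log q := by linarith
  have h1 : δ * (log δ - log q - log (1 - δ)) < p * (log δ - log q - log (1 - δ)) :=
    mul_lt_mul_of_pos_right hp (by linarith)
  have h2 := mul_le_mul_of_nonneg_left hG hδ0.le
  nlinarith [mul_nonneg (by linarith : 0 ≤ 1 - δ) hq0.le]

theorem statement2 {Ω S 𝒲 : Type*} [MeasurableSpace Ω] [MeasurableSpace S] [MeasurableSpace 𝒲]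
    (m u : ℕ) (hm : 1 ≤ m) (hu : 1 ≤ u)
    (s : Fin (m + u) → S) (B : ℝ) (hB : 0 < B)
    (ℓ : 𝒲 → S → ℝ) (hℓmeas : Measurable fun p : 𝒲 × S => ℓ p.1 p.2)
    (hℓ : ∀ (w : 𝒲) (i : Fin (m + u)), 0 ≤ ℓ w (s i) ∧ ℓ w (s i) ≤ B)
    (μ : Measure Ω) [IsProbabilityMeasure μ]
    (W : Ω → 𝒲) (Z : Ω → Equiv.Perm (Fin (m + u)))
    (hW : Measurable W) (hZ : Measurable Z)
    (hZunif : Measure.map Z μ = uniformPerm (m + u))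
    (hac : Measure.map (fun ω => (W ω, Z ω)) μ ≪ (Measure.map W μ).prod (Measure.map Z μ))
    (δ : ℝ) (hδ0 : 0 < δ) (hδ1 : δ < 1) :
    1 - δ ≤
      (μ {ω | |Rtest m u s ℓ (W ω) (Z ω) - Rtrain m u s ℓ (W ω) (Z ω)|
        ≤ Real.sqrt ((2 * B ^ 2 * Cmu m u * ((m : ℝ) + u) / (m * u)) *
            (Real.log (2 / δ) + mutInfo μ W Z / δ))}).toReal := by

  have hIP : IsProbabilityMeasure (Measure.map W μ) :=
    Measure.isProbabilityMeasure_map hW.aemeasurable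
  have hIP2 : IsProbabilityMeasure (Measure.map Z μ) :=
    Measure.isProbabilityMeasure_map hZ.aemeasurable
  have hIP3 : IsProbabilityMeasure (Measure.map (fun ω => (W ω, Z ω)) μ) :=
    Measure.isProbabilityMeasure_map (hW.prodMk hZ).aemeasurable
  have hint := integrable_llr_of_le _ _ hac _ (joint_le (m + u) μ W Z hW hZ hZunif)
  set P := Measure.map (fun ω => (W ω, Z ω)) μ with hP
  set Q := (Measure.map W μ).prod (Measure.map Z μ) with hQ
  have hIeq : mutInfo μ W Z = klDivR P Q := rfl
  -- Gibbs' inequality: the variational bound tested on the constant `1`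
  have hI : 0 ≤ mutInfo μ W Z := by
    have h := kl_two_point P Q hac hint ∅ .empty 1 1 one_pos one_pos
    rw [hIeq]
    simpa using h
  set L := log (2 / δ) + mutInfo μ W Z / δ with hL
  have hL0 : 0 ≤ L := by
    have : 0 ≤ log (2 / δ) := log_nonneg (by rw [le_div_iff₀ hδ0]; linarith)
    positivity
  set ε := √(2 * B ^ 2 * Cmu m u * ((m : ℝ) + u) / (m * u) * L) with hε
  set E : Set (𝒲 × Equiv.Perm (Fin (m + u))) :=
    {x | ε < |Rtest m u s ℓ x.1 x.2 - Rtrain m u s ℓ x.1 x.2|} with hEdef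
  have hℓi : ∀ i, Measurable fun w => ℓ w (s i) := fun i =>
    hℓmeas.comp (measurable_id.prodMk measurable_const)
  have hmeas : Measurable fun x : 𝒲 × Equiv.Perm (Fin (m + u)) =>
      |Rtest m u s ℓ x.1 x.2 - Rtrain m u s ℓ x.1 x.2| := by
    refine measurable_from_prod_countable_left fun z => ?_
    unfold Rtest Rtrain
    refine Measurable.abs (Measurable.sub (Measurable.div_const ?_ _) (Measurable.div_const ?_ _))
    all_goals
      refine Finset.measurable_sum _ fun i _ => ?_
      split_ifs
      · exact hℓi (z i)
      · exact measurable_const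
  have hE : MeasurableSet E := measurableSet_lt measurable_const hmeas
  have hq : Q.real E ≤ 2 * exp (-(2 * L)) := by
    refine ENNReal.toReal_le_of_le_ofReal (by positivity) ?_
    rw [hQ, Measure.prod_apply hE]
    refine (lintegral_mono (g := fun _ => ENNReal.ofReal (2 * exp (-(2 * L)))) fun w => ?_).trans
      (by simp)
    have h := gap_tail m u hm hu s B hB ℓ w (hℓ w) L hL0
    rw [hZunif]
    exact (ENNReal.le_ofReal_iff_toReal_le (measure_ne_top _ _) (by positivity)).2 h
  have hp : P.real E ≤ δ := by
    rcases (measureReal_nonneg : 0 ≤ Q.real E).eq_or_lt with h0 | h0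
    · have hPE : P E = 0 := hac ((measureReal_eq_zero_iff).1 h0.symm)
      rw [measureReal_def, hPE]
      simpa using hδ0.le
    · exact prob_le_of_kl δ _ _ _ hδ0 hδ1 hI h0 hq
        (kl_two_point P Q hac hint E hE _ _ (div_pos hδ0 h0) (by linarith))
  have hpre : μ.real ((fun ω => (W ω, Z ω)) ⁻¹' E) ≤ δ := by
    rwa [← map_measureReal_apply (hW.prodMk hZ) hE]
  have hcompl : {ω | |Rtest m u s ℓ (W ω) (Z ω) - Rtrain m u s ℓ (W ω) (Z ω)| ≤ ε}
      = ((fun ω => (W ω, Z ω)) ⁻¹' E)ᶜ := by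
    ext ω
    simp [hEdef]
  rw [hcompl, ← measureReal_def, probReal_compl_eq_one_sub ((hW.prodMk hZ) hE)]
  linarith

end
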